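/- Regular views suffice: Let A be an NFA over β with finitely many states and let L_s be a language over α ⊕ β. If there exist views V : α → Language β (with each V(a) an arbitrary, possibly non-regular, language) capturing ⟨L_s, L(A)⟩, then there exist views V' capturing ⟨L_s, L(A)⟩ such that every V'(a) is a regular language. -/

import Mathlib

/-!
Two words over `β` are equivalent when they induce the same transformation
`S ↦ A.evalFrom S w` of state sets of `A`. This is a congruence for concatenation, acceptance by `A`
is invariant under it, and it has finitely many classes because `σ` is finite. Replacing each view
by its saturation (the union of the classes it meets) therefore keeps `L_s[V]` inside `L(A)`
(`exists_mem_subst_of_mem_subst_saturate`), can only enlarge `L_s[V]`, and makes every view regular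
(`isRegular_saturate`): the transformations themselves are the states of a DFA recognising it.
-/

/-- Substituted letter: a source letter is replaced by its view, a target letter by itself. -/
def viewHat {α β : Type*} (V : α → Language β) : α ⊕ β → Language β
  | Sum.inl a => V a
  | Sum.inr b => {[b]}

/-- Substitution `s[V]` of views into a word over the combined alphabet. -/
def subst {α β : Type*} (V : α → Language β) (s : List (α ⊕ β)) : Language β :=
  (s.map (viewHat V)).prod

/-- Substitution `L_s[V]` of views into a source language. -/
def langSubst {α β : Type*} (V : α → Language β) (Ls : Language (α ⊕ β)) : Language β :=
  ⋃ s ∈ Ls, subst V s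

/-- Views `V` capture the mapping `⟨L_s, L_t⟩`. -/
def Captures {α β : Type*} (V : α → Language β) (Ls : Language (α ⊕ β))
    (Lt : Language β) : Prop :=
  langSubst V Ls ≤ Lt ∧ langSubst V Ls ≠ 0

/-- The words inducing the same transformation of state sets of `A` as some word of `L`. -/
def saturate {β σ : Type*} (A : NFA β σ) (L : Language β) : Language β :=
  {w | ∃ v ∈ L, ∀ S, A.evalFrom S w = A.evalFrom S v}

/-- The DFA whose state after reading `w` is the transformation `S ↦ A.evalFrom S w`; it accepts
when this transformation is induced by a word of `L`. -/
def transformationDFA {β σ : Type*} (A : NFA β σ) (L : Language β) :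
    DFA β (Set σ → Set σ) where
  step f b := fun S => A.stepSet (f S) b
  start := id
  accept := {f | ∃ v ∈ L, ∀ S, f S = A.evalFrom S v}

theorem transformationDFA_evalFrom {β σ : Type*} (A : NFA β σ) (L : Language β) (w : List β)
    (f : Set σ → Set σ) (S : Set σ) :
    (transformationDFA A L).evalFrom f w S = A.evalFrom (f S) w := by
  induction w generalizing f with
  | nil => rfl
  | cons b w ih =>
    rw [DFA.evalFrom_cons, ih, NFA.evalFrom_cons]
    rfl

theorem isRegular_saturate {β σ : Type*} [Fintype σ] (A : NFA β σ) (L : Language β) :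
    (saturate A L).IsRegular := by
  classical
  refine Language.isRegular_iff.2 ⟨Set σ → Set σ, inferInstance, transformationDFA A L, ?_⟩
  ext w
  change (∃ v ∈ L, ∀ S, (transformationDFA A L).evalFrom id w S = A.evalFrom S v) ↔
    ∃ v ∈ L, ∀ S, A.evalFrom S w = A.evalFrom S v
  simp only [transformationDFA_evalFrom, id]

theorem le_saturate {β σ : Type*} (A : NFA β σ) (L : Language β) : L ≤ saturate A L :=
  fun w hw => ⟨w, hw, fun _ => rfl⟩

theorem mem_subst_cons {α β : Type*} {V : α → Language β} {c : α ⊕ β} {s : List (α ⊕ β)}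
    {w : List β} :
    w ∈ subst V (c :: s) ↔ ∃ x ∈ viewHat V c, ∃ y ∈ subst V s, x ++ y = w := by
  simp only [subst, List.map_cons, List.prod_cons, Language.mem_mul]

theorem mem_langSubst {α β : Type*} {V : α → Language β} {Ls : Language (α ⊕ β)} {w : List β} :
    w ∈ langSubst V Ls ↔ ∃ s ∈ Ls, w ∈ subst V s := by
  have h := Set.mem_iUnion₂ (x := w) (s := fun s (_ : s ∈ Ls) => (subst V s : Set (List β)))
  simp only [exists_prop] at h
  exact h

theorem subst_mono {α β : Type*} {V W : α → Language β} (h : ∀ a, V a ≤ W a)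
    (s : List (α ⊕ β)) : subst V s ≤ subst W s := by
  induction s with
  | nil => exact le_rfl
  | cons c s ih =>
    intro w hw
    obtain ⟨x, hx, y, hy, rfl⟩ := mem_subst_cons.1 hw
    refine mem_subst_cons.2 ⟨x, ?_, y, ih hy, rfl⟩
    cases c with
    | inl a => exact h a hx
    | inr b => exact hx

/-- Since equality of induced transformations is a congruence, saturating the views only adds to
`s[V]` words equivalent to words already there. -/
theorem exists_mem_subst_of_mem_subst_saturate {α β σ : Type*} (A : NFA β σ) (V : α → Language β)
    (s : List (α ⊕ β)) (w : List β) (hw : w ∈ subst (fun a => saturate A (V a)) s) :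
    ∃ v ∈ subst V s, ∀ S, A.evalFrom S w = A.evalFrom S v := by
  induction s generalizing w with
  | nil => exact ⟨w, hw, fun _ => rfl⟩
  | cons c s ih =>
    obtain ⟨x, hx, y, hy, rfl⟩ := mem_subst_cons.1 hw
    obtain ⟨y', hy', hyy⟩ := ih y hy
    have hc : ∃ x' ∈ viewHat V c, ∀ S, A.evalFrom S x = A.evalFrom S x' := by
      cases c with
      | inl a => exact hx
      | inr b => exact ⟨x, hx, fun _ => rfl⟩
    obtain ⟨x', hx', hxx⟩ := hc
    refine ⟨x' ++ y', mem_subst_cons.2 ⟨x', hx', y', hy', rfl⟩, fun S => ?_⟩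
    rw [NFA.evalFrom_append, NFA.evalFrom_append, hxx, hyy]

/-- Regular views suffice: if arbitrary (possibly non-regular) views capture
`⟨L_s, L(A)⟩` for an NFA `A` with finitely many states, then some views all of whose
languages are regular capture `⟨L_s, L(A)⟩`. -/
theorem regular_views_suffice {α β σ : Type*} [Fintype σ] (A : NFA β σ)
    (Ls : Language (α ⊕ β))
    (h : ∃ V : α → Language β, Captures V Ls A.accepts) :
    ∃ V' : α → Language β, Captures V' Ls A.accepts ∧
      ∀ a : α, (V' a).IsRegular := by
  obtain ⟨V, hle, hne⟩ := h
  refine ⟨fun a => saturate A (V a), ⟨?_, ?_⟩, fun a => isRegular_saturate A (V a)⟩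
  · intro w hw
    obtain ⟨s, hs, hws⟩ := mem_langSubst.1 hw
    obtain ⟨v, hv, hwv⟩ := exists_mem_subst_of_mem_subst_saturate A V s w hws
    have hacc : v ∈ A.accepts := hle (mem_langSubst.2 ⟨s, hs, hv⟩)
    change w ∈ A.accepts
    rw [NFA.mem_accepts] at hacc ⊢
    rwa [hwv]
  · intro h0
    refine hne (le_bot_iff.1 fun w hw => ?_)
    obtain ⟨s, hs, hws⟩ := mem_langSubst.1 hw
    have hw' : w ∈ langSubst (fun a => saturate A (V a)) Ls :=
      mem_langSubst.2 ⟨s, hs, subst_mono (fun a => le_saturate A (V a)) s hws⟩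
    rw [h0] at hw'
    exact hw'
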